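/- Let Λ be a τ-stable lattice with Λ = pΛ^∨. Then every D ∈ ℳ(𝔽) with Λ ⊆ D satisfies Λ ⊂¹ D, and the assignment D ↦ D/Λ is a bijection from the set {D ∈ ℳ(𝔽) : Λ ⊆ D} onto the set of 𝔽-subspaces U ⊆ V(Λ) with dim U = 1, U ⊆ U^⊥, dim (U + σ̄U)/U ≤ 1, and U ⊆ U^⊥ ∩ σ̄(U^⊥). -/

import Mathlib

open Pointwise

noncomputable section

variable (p : ℕ) [Fact p.Prime] (𝔽 : Type) [Field 𝔽] [IsAlgClosed 𝔽] [CharP 𝔽 p]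

/-- The Witt ring `W(𝔽)`. -/
abbrev Wp := WittVector p 𝔽

/-- The fraction field `K` of `W(𝔽)`. -/
abbrev Kp := FractionRing (Wp p 𝔽)

/-- `N₀ = K⁴`. -/
abbrev N0 := Fin 4 → Kp p 𝔽

/-- The symplectic form on `N₀`. -/
def omegaForm (x y : N0 p 𝔽) : Kp p 𝔽 :=
  x 0 * y 3 - x 3 * y 0 + x 1 * y 2 - x 2 * y 1

/-- The dual lattice of a `W`-submodule of `N₀`. -/
def dualL (D : Submodule (Wp p 𝔽) (N0 p 𝔽)) : Submodule (Wp p 𝔽) (N0 p 𝔽) where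
  carrier := {x | ∀ d ∈ D, omegaForm p 𝔽 x d ∈ (algebraMap (Wp p 𝔽) (Kp p 𝔽)).range}
  zero_mem' := by
    intro d hd
    have : omegaForm p 𝔽 0 d = 0 := by simp [omegaForm]
    rw [this]; exact zero_mem _
  add_mem' := by
    intro x y hx hy d hd
    have : omegaForm p 𝔽 (x + y) d = omegaForm p 𝔽 x d + omegaForm p 𝔽 y d := by
      simp [omegaForm]; ring
    rw [this]; exact add_mem (hx d hd) (hy d hd)
  smul_mem' := by
    intro c x hx d hd
    have : omegaForm p 𝔽 (c • x) d
        = algebraMap (Wp p 𝔽) (Kp p 𝔽) c * omegaForm p 𝔽 x d := by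
      simp [omegaForm, Algebra.smul_def]; ring
    rw [this]; exact mul_mem ⟨c, rfl⟩ (hx d hd)

variable (σ : Kp p 𝔽 ≃+* Kp p 𝔽)

/-- The semilinear map `τ` on `N₀`, applying `σ` to each coordinate. -/
def tauFun (x : N0 p 𝔽) : N0 p 𝔽 := fun i => σ (x i)

/-- The lattice `τD` generated by the image of `D` under `τ`. -/
def tauL (D : Submodule (Wp p 𝔽) (N0 p 𝔽)) : Submodule (Wp p 𝔽) (N0 p 𝔽) :=
  Submodule.span (Wp p 𝔽) (tauFun p 𝔽 σ '' D)

/-- `D` is a lattice in `N₀`: finitely generated over `W` and spanning `N₀` over `K`. -/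
def IsLattice (D : Submodule (Wp p 𝔽) (N0 p 𝔽)) : Prop :=
  D.FG ∧ Submodule.span (Kp p 𝔽) (D : Set (N0 p 𝔽)) = ⊤

/-- The length of the `W`-module `B / A` (as the Krull dimension of its submodule
lattice). -/
def relLength (A B : Submodule (Wp p 𝔽) (N0 p 𝔽)) : WithBot ℕ∞ :=
  Order.krullDim (Submodule (Wp p 𝔽) (B ⧸ (A.comap B.subtype)))

/-- `A ⊂ᵈ B` : `A ⊆ B` with colength `d`. -/
def SubD (d : ℕ) (A B : Submodule (Wp p 𝔽) (N0 p 𝔽)) : Prop :=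
  A ≤ B ∧ relLength p 𝔽 A B = (d : WithBot ℕ∞)

/-- Membership in `ℳ(𝔽)`. -/
def memM (D : Submodule (Wp p 𝔽) (N0 p 𝔽)) : Prop :=
  IsLattice p 𝔽 D ∧
  SubD p 𝔽 2 ((p : Wp p 𝔽) • dualL p 𝔽 D) D ∧
  SubD p 𝔽 2 D (dualL p 𝔽 D) ∧
  SubD p 𝔽 2 ((p : Wp p 𝔽) • dualL p 𝔽 D) (tauL p 𝔽 σ D) ∧
  SubD p 𝔽 2 (tauL p 𝔽 σ D) (dualL p 𝔽 D) ∧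
  relLength p 𝔽 D (D ⊔ tauL p 𝔽 σ D) ≤ 1

/-- `σ` is the automorphism of `K` induced by the Witt-vector Frobenius. -/
def IsWittFrobenius : Prop :=
  ∀ w : Wp p 𝔽, σ (algebraMap (Wp p 𝔽) (Kp p 𝔽) w)
    = algebraMap (Wp p 𝔽) (Kp p 𝔽) (WittVector.frobeniusEquiv p 𝔽 w)

/-!
Duality `D ↦ D^∨` reverses the order on lattices, multiplication by `p` and `τ` preserve it, and `τ`
commutes with duality. If `Λ = pΛ^∨` and `Λ ⊆ D` with `pD^∨ ⊂² D`, then `pD^∨ ⊆ pΛ^∨ = Λ ⊆ D`, and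
the two steps of this chain are proper or not together, so both have colength one. Conversely, if
`Λ ⊂¹ U ⊆ Λ^∨`, then `pU^∨ ⊂¹ Λ` and `U^∨ ⊂¹ Λ^∨`, while `Λ = pΛ^∨` has colength `4` in `Λ^∨`. Thus
every `X ⊆ U^∨` with `Λ ⊂¹ X` satisfies `pU^∨ ⊂² X ⊂² U^∨`. This applies to `X = U` and to `X = τU`,
since `Λ = τΛ`, and the condition `τU ⊆ U^∨` is dual to `U ⊆ τ(U^∨)`.
-/

lemma eq_one_of_add_eq_two {a b : ℕ∞} (hab : a + b = 2) (h_zero_iff : a = 0 ↔ b = 0) : b = 1 := by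
  lift a to ℕ using ne_top_of_le_ne_top (by decide) (le_self_add.trans hab.le)
  lift b to ℕ using ne_top_of_le_ne_top (by decide) (le_add_self.trans hab.le)
  norm_cast at *
  omega

section Colength

variable {R M : Type*} [Ring R] [AddCommGroup M] [Module R M] {A B C : Submodule R M}

/-- The length of the quotient `B / (A ∩ B)`, hence of `B / A` when `A ≤ B`. -/
def colength (A B : Submodule R M) : ℕ∞ :=
  Module.length R (B ⧸ A.comap B.subtype)

lemma colength_eq_zero_iff : colength A B = 0 ↔ B ≤ A := by
  rw [colength, Module.length_eq_zero_iff, Submodule.Quotient.subsingleton_iff,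
    Submodule.comap_subtype_eq_top]

lemma colength_eq_one_iff (hAB : A ≤ B) : colength A B = 1 ↔ A ⋖ B := by
  rw [covBy_iff_quot_is_simple hAB]
  exact Module.length_eq_one_iff

lemma colength_add (hAB : A ≤ B) (hBC : B ≤ C) :
    colength A B + colength B C = colength A C := by
  have hA : A.comap B.subtype = (A.comap C.subtype).comap (Submodule.inclusion hBC) := rfl
  have hAB' : A.comap C.subtype ≤ B.comap C.subtype := Submodule.comap_mono hAB
  refine (Module.length_eq_add_of_exact
    (Submodule.mapQ _ _ (Submodule.inclusion hBC) hA.le) (Submodule.factor hAB') ?_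
    (Submodule.factor_surjective hAB') ?_).symm
  · rw [← LinearMap.ker_eq_bot, Submodule.ker_mapQ, ← hA, Submodule.mkQ_map_self]
  · rw [LinearMap.exact_iff, Submodule.factor, Submodule.ker_mapQ, Submodule.range_mapQ,
      Submodule.range_inclusion]
    rfl

lemma map_covBy_map_iff {S N : Type*} [Ring S] [AddCommGroup N] [Module S N] {φ : R →+* S}
    [RingHomSurjective φ] {f : M →ₛₗ[φ] N} (hf : Function.Bijective f) :
    A.map f ⋖ B.map f ↔ A ⋖ B :=
  apply_covBy_apply_iff (Submodule.orderIsoMapComapOfBijective f hf)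

end Colength

lemma length_quotSMulTop {R M : Type*} [CommRing R] [Nontrivial R] [AddCommGroup M] [Module R M]
    [Module.Free R M] [Module.Finite R M] (r : R) :
    Module.length R (QuotSMulTop r M) =
      Module.finrank R M * Module.length R (R ⧸ Ideal.span {r}) := by
  rw [((QuotSMulTop.equivQuotTensor r M).trans
    (TensorProduct.equivFinsuppOfBasisRight (Module.finBasis R M))).length_eq,
    Module.length_finsupp, ENat.card_eq_coe_fintype_card, Fintype.card_fin]

lemma colength_smul_self {R M : Type*} [CommRing R] [AddCommGroup M] [Module R M] (r : R)
    (N : Submodule R M) : colength (r • N) N = Module.length R (QuotSMulTop r N) := by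
  have : (r • N).comap N.subtype = r • ⊤ := by
    rw [← Submodule.comap_map_eq_of_injective N.injective_subtype (r • ⊤),
      Submodule.map_pointwise_smul, N.map_subtype_top]
  rw [colength, this]

section Dual

open LinearMap (BilinForm)

variable {R K V : Type*} [CommRing R] [Field K] [Algebra R K] [AddCommGroup V] [Module R V]
  [Module K V] [IsScalarTower R K V] {B : BilinForm K V} {L M : Submodule R V}

lemma dualSubmodule_antitone (B : BilinForm K V) :
    Antitone (B.dualSubmodule : Submodule R V → Submodule R V) :=
  fun _ _ h _ hx y hy => hx y (h hy)

lemma flip_dualSubmodule_of_isAlt (hB : B.IsAlt) (L : Submodule R V) :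
    B.flip.dualSubmodule L = B.dualSubmodule L := by
  ext x
  refine forall₂_congr fun y _ => ?_
  rw [LinearMap.BilinForm.flip_apply, ← hB.neg_eq, neg_mem_iff]

lemma le_dualSubmodule_comm (hB : B.IsAlt) :
    L ≤ B.dualSubmodule M ↔ M ≤ B.dualSubmodule L := by
  rw [← B.le_flip_dualSubmodule, flip_dualSubmodule_of_isAlt hB]

lemma map_dualSubmodule {φ : R ≃+* R} {θ : K ≃+* K}
    (hθ : ∀ r, θ (algebraMap R K r) = algebraMap R K (φ r)) {f : V →ₛₗ[(φ : R →+* R)] V}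
    (hf : Function.Surjective f) (hBf : ∀ x y, B (f x) (f y) = θ (B x y)) :
    (B.dualSubmodule L).map f = B.dualSubmodule (L.map f) := by
  have h_integral (a : K) : θ a ∈ (1 : Submodule R K) ↔ a ∈ (1 : Submodule R K) := by
    rw [Submodule.mem_one, Submodule.mem_one, φ.surjective.exists]
    exact exists_congr fun r => by rw [← hθ, θ.injective.eq_iff]
  apply le_antisymm
  · rintro _ ⟨x, hx, rfl⟩ _ ⟨y, hy, rfl⟩
    rw [hBf, h_integral]
    exact hx y hy
  · intro x hx
    obtain ⟨y, rfl⟩ := hf x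
    refine Submodule.mem_map_of_mem fun z hz => ?_
    rw [← h_integral, ← hBf]
    exact hx _ (Submodule.mem_map_of_mem hz)

lemma isLattice_span_basis {ι : Type*} [Finite ι] (b : Module.Basis ι K V) :
    Submodule.IsLattice K (Submodule.span R (Set.range b)) where
  fg := Submodule.fg_span (Set.finite_range b)
  span_eq_top := by rw [Submodule.span_span_of_tower, b.span_eq]

lemma isLattice_of_le_of_le [IsNoetherianRing R] {N : Submodule R V}
    [Submodule.IsLattice K L] [Module.Finite R N] (hLM : L ≤ M) (hMN : M ≤ N) :
    Submodule.IsLattice K M :=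
  have := isNoetherian_of_le hMN
  .of_le_of_isLattice_of_fg K hLM (Module.Finite.iff_fg.1 inferInstance)

variable (K) in
lemma bijective_smul [FaithfulSMul R K] {r : R} (hr : r ≠ 0) :
    Function.Bijective (DistribSMul.toLinearMap R V r) := by
  have hrK : algebraMap R K r ≠ 0 := by
    rwa [Ne, FaithfulSMul.algebraMap_eq_zero_iff]
  have h_smul : ⇑(DistribSMul.toLinearMap R V r) = (algebraMap R K r • ·) :=
    funext fun x => (algebraMap_smul K r x).symm
  rw [h_smul]
  exact MulAction.bijective₀ hrK

variable [IsDomain R] [IsPrincipalIdealRing R] [IsFractionRing R K]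

lemma exists_basis_span_eq (L : Submodule R V) [Submodule.IsLattice K L] :
    ∃ (n : ℕ) (b : Module.Basis (Fin n) K V), Submodule.span R (Set.range b) = L := by
  let b := Module.finBasis R L
  refine ⟨_, b.extendOfIsLattice K, ?_⟩
  have : Set.range (b.extendOfIsLattice K) = L.subtype '' Set.range b := by
    rw [← Set.range_comp]
    exact congrArg Set.range (funext fun i => b.extendOfIsLattice_apply K i)
  rw [this, Submodule.span_image, b.span_eq, Submodule.map_subtype_top]

lemma isLattice_dualSubmodule (hB : B.Nondegenerate) (L : Submodule R V)
    [Submodule.IsLattice K L] : Submodule.IsLattice K (B.dualSubmodule L) := by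
  obtain ⟨n, b, rfl⟩ := exists_basis_span_eq L
  have := b.finiteDimensional_of_finite
  rw [B.dualSubmodule_span_of_basis hB]
  exact isLattice_span_basis _

lemma dualSubmodule_dualSubmodule (hB : B.Nondegenerate) (hB' : B.IsAlt) (L : Submodule R V)
    [Submodule.IsLattice K L] : B.dualSubmodule (B.dualSubmodule L) = L := by
  obtain ⟨n, b, rfl⟩ := exists_basis_span_eq L
  rw [← flip_dualSubmodule_of_isAlt hB' (Submodule.span R _)]
  exact B.dualSubmodule_dualSubmodule_flip_of_basis hB b

lemma dualSubmodule_le_dualSubmodule_iff (hB : B.Nondegenerate) (hB' : B.IsAlt)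
    [Submodule.IsLattice K L] [Submodule.IsLattice K M] :
    B.dualSubmodule M ≤ B.dualSubmodule L ↔ L ≤ M :=
  ⟨fun h => by simpa only [dualSubmodule_dualSubmodule hB hB'] using dualSubmodule_antitone B h,
    fun h => dualSubmodule_antitone B h⟩

lemma dualSubmodule_lt_dualSubmodule_iff (hB : B.Nondegenerate) (hB' : B.IsAlt)
    [Submodule.IsLattice K L] [Submodule.IsLattice K M] :
    B.dualSubmodule M < B.dualSubmodule L ↔ L < M :=
  lt_iff_lt_of_le_iff_le' (dualSubmodule_le_dualSubmodule_iff hB hB')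
    (dualSubmodule_le_dualSubmodule_iff hB hB')

lemma dualSubmodule_covBy_dualSubmodule (hB : B.Nondegenerate) (hB' : B.IsAlt)
    [Submodule.IsLattice K L] [Submodule.IsLattice K M] (h : L ⋖ M) :
    B.dualSubmodule M ⋖ B.dualSubmodule L := by
  have := isLattice_dualSubmodule hB L
  have := isLattice_dualSubmodule hB M
  refine ⟨(dualSubmodule_lt_dualSubmodule_iff hB hB').2 h.lt, fun X hMX hXL => ?_⟩
  have := isLattice_of_le_of_le hMX.le hXL.le
  rw [← dualSubmodule_lt_dualSubmodule_iff hB hB', dualSubmodule_dualSubmodule hB hB'] at hMX hXL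
  exact h.2 hXL hMX

lemma colength_smul_self_of_irreducible {r : R} (hr : Irreducible r) (L : Submodule R V)
    [Submodule.IsLattice K L] : colength (r • L) L = Module.finrank K V := by
  have h_simple : IsSimpleModule R (R ⧸ Ideal.span {r}) :=
    isSimpleModule_iff_isCoatom.2 (PrincipalIdealRing.isMaximal_of_irreducible hr).out
  have h_finrank : Module.finrank R L = Module.finrank K V :=
    congrArg Cardinal.toNat (Submodule.IsLattice.rank' K L)
  rw [colength_smul_self, length_quotSMulTop, Module.length_eq_one, mul_one, h_finrank]

lemma covBy_of_colength_smul_dualSubmodule_eq_two (hB : B.Nondegenerate) (hB' : B.IsAlt) {r : R}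
    (hr : r ≠ 0) {L D : Submodule R V} [Submodule.IsLattice K L] [Submodule.IsLattice K D]
    (hL : L = r • B.dualSubmodule L) (hLD : L ≤ D)
    (hD : colength (r • B.dualSubmodule D) D = 2) : L ⋖ D := by
  have h_smul_le_smul {M N : Submodule R V} : r • M ≤ r • N ↔ M ≤ N :=
    Submodule.map_le_map_iff_of_injective (bijective_smul K hr).injective M N
  have hDL : r • B.dualSubmodule D ≤ L := by
    conv_rhs => rw [hL]
    exact h_smul_le_smul.2 (dualSubmodule_antitone B hLD)
  have h_zero_iff : colength (r • B.dualSubmodule D) L = 0 ↔ colength L D = 0 := by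
    rw [colength_eq_zero_iff, colength_eq_zero_iff,
      ← dualSubmodule_le_dualSubmodule_iff hB hB' (L := D),
      ← h_smul_le_smul (N := B.dualSubmodule D), ← hL]
  rw [← colength_eq_one_iff hLD]
  exact eq_one_of_add_eq_two ((colength_add hDL hLD).trans hD) h_zero_iff

lemma colength_smul_dualSubmodule_eq_two (hB : B.Nondegenerate) (hB' : B.IsAlt) {r : R}
    (hr : r ≠ 0) {L U X : Submodule R V} [Submodule.IsLattice K L] [Submodule.IsLattice K U]
    (hL : L = r • B.dualSubmodule L) (hLU : L ⋖ U) (hLX : L ⋖ X) :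
    r • B.dualSubmodule U ≤ X ∧ colength (r • B.dualSubmodule U) X = 2 := by
  have h_covBy : r • B.dualSubmodule U ⋖ L := by
    conv_rhs => rw [hL]
    exact (map_covBy_map_iff (bijective_smul K hr)).2 (dualSubmodule_covBy_dualSubmodule hB hB' hLU)
  refine ⟨h_covBy.le.trans hLX.le, ?_⟩
  rw [← colength_add h_covBy.le hLX.le, (colength_eq_one_iff h_covBy.le).2 h_covBy,
    (colength_eq_one_iff hLX.le).2 hLX, one_add_one_eq_two]

lemma colength_dualSubmodule_add_two (hB : B.Nondegenerate) (hB' : B.IsAlt) {r : R}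
    (hr : Irreducible r) {L U X : Submodule R V} [Submodule.IsLattice K L]
    [Submodule.IsLattice K U] (hL : L = r • B.dualSubmodule L) (hLU : L ⋖ U) (hLX : L ⋖ X)
    (hXU : X ≤ B.dualSubmodule U) :
    colength X (B.dualSubmodule U) + 2 = Module.finrank K V := by
  have := isLattice_dualSubmodule hB L
  have h_covBy : B.dualSubmodule U ⋖ B.dualSubmodule L :=
    dualSubmodule_covBy_dualSubmodule hB hB' hLU
  rw [← colength_smul_self_of_irreducible hr (B.dualSubmodule L), ← hL,
    ← colength_add hLX.le (hXU.trans h_covBy.le), ← colength_add hXU h_covBy.le,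
    (colength_eq_one_iff hLX.le).2 hLX, (colength_eq_one_iff h_covBy.le).2 h_covBy,
    add_left_comm, one_add_one_eq_two]

/-- The lattices `D` with `rD^∨ ⊂² D ⊂ⁿ D^∨`, `rD^∨ ⊂² fD ⊂ⁿ D^∨` and `D ⊂^{≤1} D + fD`, where
`⊂ᵈ` denotes an inclusion of colength `d`. For `f = τ`, `r = p` and `n = 2` they are the points of
`ℳ(𝔽)`. -/
structure IsSpecialLattice (B : BilinForm K V) (r : R) (n : ℕ) {φ : R →+* R}
    [RingHomSurjective φ] (f : V →ₛₗ[φ] V) (D : Submodule R V) : Prop where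
  isLattice : Submodule.IsLattice K D
  smul_dual_le : r • B.dualSubmodule D ≤ D ∧ colength (r • B.dualSubmodule D) D = 2
  le_dual : D ≤ B.dualSubmodule D ∧ colength D (B.dualSubmodule D) = n
  smul_dual_le_map : r • B.dualSubmodule D ≤ D.map f ∧
    colength (r • B.dualSubmodule D) (D.map f) = 2
  map_le_dual : D.map f ≤ B.dualSubmodule D ∧ colength (D.map f) (B.dualSubmodule D) = n
  colength_sup_map_le : colength D (D ⊔ D.map f) ≤ 1

lemma IsSpecialLattice.covBy (hB : B.Nondegenerate) (hB' : B.IsAlt) {r : R} (hr : r ≠ 0) {n : ℕ}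
    {φ : R →+* R} [RingHomSurjective φ] {f : V →ₛₗ[φ] V} {L D : Submodule R V}
    [Submodule.IsLattice K L] (hL : L = r • B.dualSubmodule L) (hD : IsSpecialLattice B r n f D)
    (hLD : L ≤ D) : L ⋖ D :=
  have := hD.isLattice
  covBy_of_colength_smul_dualSubmodule_eq_two hB hB' hr hL hLD hD.smul_dual_le.2

lemma isSpecialLattice_of_covBy (hB : B.Nondegenerate) (hB' : B.IsAlt) {r : R}
    (hr : Irreducible r) {n : ℕ} (hn : Module.finrank K V = n + 2) {φ : R →+* R}
    [RingHomSurjective φ] {f : V →ₛₗ[φ] V} (hf : Function.Bijective f) {L U : Submodule R V}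
    [Submodule.IsLattice K L] [Submodule.IsLattice K U] (hLf : L.map f = L)
    (hL : L = r • B.dualSubmodule L) (hLU : L ⋖ U) (hU : U ≤ B.dualSubmodule U)
    (hfU : U.map f ≤ B.dualSubmodule U) (h_sup : colength U (U ⊔ U.map f) ≤ 1) :
    IsSpecialLattice B r n f U := by
  have hLfU : L ⋖ U.map f := by
    rw [← hLf]
    exact (map_covBy_map_iff hf).2 hLU
  have h_colength {X : Submodule R V} (hLX : L ⋖ X) (hXU : X ≤ B.dualSubmodule U) :
      colength X (B.dualSubmodule U) = n := by
    have h_add := colength_dualSubmodule_add_two hB hB' hr hL hLU hLX hXU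
    rw [hn, Nat.cast_add, Nat.cast_two] at h_add
    exact ENat.add_left_injective_of_ne_top (ENat.natCast_ne_top 2) h_add
  exact ⟨‹_›, colength_smul_dualSubmodule_eq_two hB hB' hr.ne_zero hL hLU hLU,
    ⟨hU, h_colength hLU hU⟩, colength_smul_dualSubmodule_eq_two hB hB' hr.ne_zero hL hLU hLfU,
    ⟨hfU, h_colength hLfU hfU⟩, h_sup⟩

theorem stratum_type2_as_DL_variety_general (hB : B.Nondegenerate) (hB' : B.IsAlt) {r : R}
    (hr : Irreducible r) {n : ℕ} (hn : Module.finrank K V = n + 2) {φ : R ≃+* R} {θ : K ≃+* K}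
    (hθ : ∀ a, θ (algebraMap R K a) = algebraMap R K (φ a)) {f : V →ₛₗ[(φ : R →+* R)] V}
    (hf : Function.Bijective f) (hBf : ∀ x y, B (f x) (f y) = θ (B x y)) {L : Submodule R V}
    (hL_lattice : Submodule.IsLattice K L) (hLf : L.map f = L) (hL : L = r • B.dualSubmodule L) :
    (∀ D, IsSpecialLattice B r n f D → L ≤ D → L ⋖ D) ∧
    {D | IsSpecialLattice B r n f D ∧ L ≤ D} =
      {U | L ≤ U ∧ U ≤ B.dualSubmodule L ∧ colength L U = 1 ∧ U ≤ B.dualSubmodule U ∧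
        colength U (U ⊔ U.map f) ≤ 1 ∧
        U ≤ B.dualSubmodule U ⊓ (B.dualSubmodule U).map f} := by
  have h_covBy D (hD : IsSpecialLattice B r n f D) (hLD : L ≤ D) : L ⋖ D :=
    hD.covBy hB hB' hr.ne_zero hL hLD
  have h_le_map_dual {U : Submodule R V} :
      U ≤ (B.dualSubmodule U).map f ↔ U.map f ≤ B.dualSubmodule U := by
    rw [map_dualSubmodule hθ hf.surjective hBf, le_dualSubmodule_comm hB']
  refine ⟨h_covBy, Set.ext fun U => ⟨fun ⟨hU, hLU⟩ => ?_, ?_⟩⟩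
  · have hU_dual := hU.le_dual.1
    exact ⟨hLU, hU_dual.trans (dualSubmodule_antitone B hLU),
      (colength_eq_one_iff hLU).2 (h_covBy U hU hLU), hU_dual, hU.colength_sup_map_le,
      le_inf hU_dual (h_le_map_dual.2 hU.map_le_dual.1)⟩
  · rintro ⟨hLU, hUL, h_one, hU_dual, h_sup, hU_inf⟩
    have := isLattice_dualSubmodule hB L
    have := isLattice_of_le_of_le hLU hUL
    exact ⟨isSpecialLattice_of_covBy hB hB' hr hn hf hLf hL ((colength_eq_one_iff hLU).1 h_one)
      hU_dual (h_le_map_dual.1 (le_inf_iff.1 hU_inf).2) h_sup, hLU⟩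

end Dual

section Witt

open LinearMap (BilinForm)

variable (p : ℕ) [Fact p.Prime] (k : Type) [Field k]

/-- The symplectic form `ω` as a `K`-bilinear form. -/
def omegaBilin : BilinForm (Kp p k) (N0 p k) :=
  LinearMap.mk₂ (Kp p k) (omegaForm p k)
    (fun x y z => by simp only [omegaForm, Pi.add_apply]; ring)
    (fun c x y => by simp only [omegaForm, Pi.smul_apply, smul_eq_mul]; ring)
    (fun x y z => by simp only [omegaForm, Pi.add_apply]; ring)
    (fun c x y => by simp only [omegaForm, Pi.smul_apply, smul_eq_mul]; ring)

lemma omegaBilin_apply (x y : N0 p k) : omegaBilin p k x y = omegaForm p k x y := rfl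

lemma isAlt_omegaBilin : (omegaBilin p k).IsAlt := fun x => by
  rw [omegaBilin_apply, omegaForm]
  ring

lemma nondegenerate_omegaBilin : (omegaBilin p k).Nondegenerate := by
  refine (isAlt_omegaBilin p k).isRefl.nondegenerate_iff_separatingLeft.2 fun x hx => ?_
  have h_coord (i : Fin 4) := hx (Pi.single i 1)
  simp only [omegaBilin_apply, omegaForm] at h_coord
  ext i
  fin_cases i
  · simpa using h_coord 3
  · simpa using h_coord 2
  · simpa using h_coord 1
  · simpa using h_coord 0

variable {p k}

lemma dualL_eq_dualSubmodule [CharP k p] (D : Submodule (Wp p k) (N0 p k)) :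
    dualL p k D = (omegaBilin p k).dualSubmodule D := by
  ext x
  exact forall₂_congr fun y _ => Submodule.mem_one.symm

lemma isLattice_iff [CharP k p] {D : Submodule (Wp p k) (N0 p k)} :
    IsLattice p k D ↔ Submodule.IsLattice (Kp p k) D :=
  ⟨fun h => ⟨h.1, h.2⟩, fun h => ⟨h.fg, h.span_eq_top⟩⟩

lemma relLength_eq_coe_colength (A B : Submodule (Wp p k) (N0 p k)) :
    relLength p k A B = (colength A B : ℕ∞) :=
  (Module.coe_length _ _).symm

lemma relLength_eq_natCast_iff {A B : Submodule (Wp p k) (N0 p k)} {d : ℕ} :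
    relLength p k A B = d ↔ colength A B = d := by
  rw [relLength_eq_coe_colength]
  norm_cast

lemma relLength_le_one_iff {A B : Submodule (Wp p k) (N0 p k)} :
    relLength p k A B ≤ 1 ↔ colength A B ≤ 1 := by
  rw [relLength_eq_coe_colength]
  norm_cast

lemma relLength_eq_one_iff {A B : Submodule (Wp p k) (N0 p k)} :
    relLength p k A B = 1 ↔ colength A B = 1 := by
  rw [relLength_eq_coe_colength]
  norm_cast

lemma subD_one_iff_covBy {A B : Submodule (Wp p k) (N0 p k)} : SubD p k 1 A B ↔ A ⋖ B := by
  rw [SubD, relLength_eq_natCast_iff, Nat.cast_one]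
  exact ⟨fun h => (colength_eq_one_iff h.1).1 h.2, fun h => ⟨h.le, (colength_eq_one_iff h.le).2 h⟩⟩

variable {φ : Wp p k ≃+* Wp p k} {θ : Kp p k ≃+* Kp p k}
  (hθ : ∀ w, θ (algebraMap (Wp p k) (Kp p k) w) = algebraMap (Wp p k) (Kp p k) (φ w))

/-- The map `τ` as a semilinear map over the automorphism `φ` of `W` that `θ` restricts to. -/
def tauMap : N0 p k →ₛₗ[(φ : Wp p k →+* Wp p k)] N0 p k where
  toFun := tauFun p k θ
  map_add' x y := funext fun i => map_add θ (x i) (y i)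
  map_smul' w x := funext fun i => by
    simp only [tauFun, Pi.smul_apply, Algebra.smul_def, map_mul, hθ, RingHom.coe_coe]

lemma bijective_tauMap : Function.Bijective (tauMap hθ) :=
  θ.bijective.comp_left

lemma omegaBilin_tauMap (x y : N0 p k) :
    omegaBilin p k (tauMap hθ x) (tauMap hθ y) = θ (omegaBilin p k x y) := by
  simp only [omegaBilin_apply, omegaForm, map_add, map_sub, map_mul]
  rfl

lemma tauL_eq_map (D : Submodule (Wp p k) (N0 p k)) : tauL p k θ D = D.map (tauMap hθ) := by
  rw [tauL, ← Submodule.span_eq (D.map (tauMap hθ)), Submodule.map_coe]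
  rfl

lemma memM_iff_isSpecialLattice [CharP k p] {D : Submodule (Wp p k) (N0 p k)} :
    memM p k θ D ↔ IsSpecialLattice (omegaBilin p k) (p : Wp p k) 2 (tauMap hθ) D := by
  simp only [memM, SubD, isLattice_iff, dualL_eq_dualSubmodule, tauL_eq_map hθ,
    relLength_eq_natCast_iff, relLength_le_one_iff]
  exact ⟨fun ⟨h₁, h₂, h₃, h₄, h₅, h₆⟩ => ⟨h₁, h₂, h₃, h₄, h₅, h₆⟩,
    fun ⟨h₁, h₂, h₃, h₄, h₅, h₆⟩ => ⟨h₁, h₂, h₃, h₄, h₅, h₆⟩⟩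

end Witt

/-- Let `Λ` be a `τ`-stable lattice with `Λ = pΛ^∨`. Every `D ∈ ℳ(𝔽)`
with `Λ ⊆ D` satisfies `Λ ⊂¹ D`, and `D ↦ D/Λ` is a bijection from
`{D ∈ ℳ(𝔽) : Λ ⊆ D}` onto the set of `𝔽`-subspaces `U ⊆ V(Λ) = Λ^∨/Λ` with
`dim U = 1`, `U ⊆ U^⊥`, `dim (U + σ̄U)/U ≤ 1` and `U ⊆ U^⊥ ∩ σ̄(U^⊥)`.

Here subspaces of `V(Λ)` are encoded by `W`-submodules `U` with `Λ ⊆ U ⊆ Λ^∨`;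
`dim` becomes the `W`-length relative to `Λ`, the orthogonal complement with respect
to the rescaled form `p·ω` is induced by `U^∨`, and `σ̄U` is induced by `τU`. Under
this encoding `D ↦ D/Λ` corresponds to `D ↦ D`, so bijectivity becomes an equality
of sets of submodules. -/
theorem stratum_type2_as_DL_variety
    (p : ℕ) [Fact p.Prime] (hp : Odd p)
    (𝔽 : Type) [Field 𝔽] [IsAlgClosed 𝔽] [CharP 𝔽 p]
    (σ : Kp p 𝔽 ≃+* Kp p 𝔽) (hσ : IsWittFrobenius p 𝔽 σ)
    (Λ : Submodule (Wp p 𝔽) (N0 p 𝔽)) (hΛ : IsLattice p 𝔽 Λ)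
    (hτΛ : tauL p 𝔽 σ Λ = Λ) (htype2 : Λ = (p : Wp p 𝔽) • dualL p 𝔽 Λ) :
    (∀ D : Submodule (Wp p 𝔽) (N0 p 𝔽), memM p 𝔽 σ D → Λ ≤ D → SubD p 𝔽 1 Λ D) ∧
    {D : Submodule (Wp p 𝔽) (N0 p 𝔽) | memM p 𝔽 σ D ∧ Λ ≤ D} =
      {U : Submodule (Wp p 𝔽) (N0 p 𝔽) |
        Λ ≤ U ∧ U ≤ dualL p 𝔽 Λ ∧
        relLength p 𝔽 Λ U = (1 : WithBot ℕ∞) ∧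
        U ≤ dualL p 𝔽 U ∧
        relLength p 𝔽 U (U ⊔ tauL p 𝔽 σ U) ≤ 1 ∧
        U ≤ dualL p 𝔽 U ⊓ tauL p 𝔽 σ (dualL p 𝔽 U)} := by
  simp only [dualL_eq_dualSubmodule, tauL_eq_map hσ, isLattice_iff, memM_iff_isSpecialLattice hσ,
    subD_one_iff_covBy, relLength_eq_one_iff, relLength_le_one_iff] at hΛ hτΛ htype2 ⊢
  exact stratum_type2_as_DL_variety_general (nondegenerate_omegaBilin p 𝔽) (isAlt_omegaBilin p 𝔽)
    (WittVector.irreducible p) (Module.finrank_fin_fun _) hσ (bijective_tauMap hσ)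
    (omegaBilin_tauMap hσ) hΛ hτΛ htype2

end
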